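/- Let X be a complex Banach space and let (T(t))_{t≥0} be a bounded strongly continuous semigroup on X whose generator A satisfies σ(A) ∩ iℝ = ∅. Suppose M : [0, ∞) → (0, ∞) is a continuous non-decreasing function with M(s) → ∞ as s → ∞ such that limsup_{|s|→∞} ‖(is − A)^{−1}‖ / M(|s|) > 0. Then there exists c > 0 such that limsup_{t→∞} M^{−1}(ct)·‖T(t)A^{−1}‖ > 0, where M^{−1}(t) = sup{s ≥ 0 : M(s) ≤ t} is the right-continuous right-inverse of M. If, in addition, M has positive increase, then this conclusion holds for every c > 0. -/

import Mathlib

/-!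
If `R = (z - A)⁻¹` and `S = (w - A)⁻¹` with `0 ≤ Re z`, differentiating `exp (-z r) T(r) x` along
the orbit gives `‖R‖ ≤ ‖T(t) R‖ + K t`, while the resolvent identity expresses `T(t) R` through
`T(t) S`. Hence `‖z - w‖ ‖T(t) S‖` cannot be small when `‖R‖` exceeds `1 + 2 K t`. At points
`z = i s` where `‖R‖ ≥ c₀ M(|s|)`, this applies to a time `t` proportional to `M(|s|)`, and
`|s| ≤ M⁻¹(M(|s|))` turns the bound into one on `M⁻¹(c t) ‖T(t) S‖`. Positive increase of `M` makes
`M⁻¹(a t)` and `M⁻¹(b t)` comparable, so that the constant `c` becomes arbitrary.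
-/

noncomputable section

open Complex Set Filter
open scoped Topology

namespace NUS

variable {X : Type*} [NormedAddCommGroup X] [NormedSpace ℂ X] [CompleteSpace X]

/-- A strongly continuous (one-parameter) semigroup of bounded operators on `X`. -/
structure IsC0Semigroup (T : ℝ → X →L[ℂ] X) : Prop where
  map_zero : T 0 = 1
  map_add : ∀ ⦃s t : ℝ⦄, 0 ≤ s → 0 ≤ t → T (s + t) = (T s).comp (T t)
  strongly_continuous : ∀ x : X, ContinuousOn (fun t => T t x) (Ici (0 : ℝ))

/-- `A` is the infinitesimal generator of the semigroup `T`. -/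
def IsGenerator (A : X →ₗ.[ℂ] X) (T : ℝ → X →L[ℂ] X) : Prop :=
  ∀ x y : X,
    (∃ hx : x ∈ A.domain, A ⟨x, hx⟩ = y) ↔
      Tendsto (fun t : ℝ => (t : ℂ)⁻¹ • (T t x - x)) (𝓝[>] (0 : ℝ)) (𝓝 y)

/-- `R` is the resolvent operator `(lam - A)⁻¹` of `A` at `lam`; in particular `lam`
belongs to the resolvent set of `A`. -/
def IsResolvent (A : X →ₗ.[ℂ] X) (lam : ℂ) (R : X →L[ℂ] X) : Prop :=
  (∀ y : X, ∃ h : R y ∈ A.domain, lam • R y - A ⟨R y, h⟩ = y) ∧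
  (∀ x : A.domain, R (lam • (x : X) - A x) = (x : X))

/-- The right-continuous right-inverse `M⁻¹(t) = sup { s ≥ 0 : M(s) ≤ t }` of a
non-decreasing function `M`. -/
def Minv (M : ℝ → ℝ) (t : ℝ) : ℝ :=
  sSup {s : ℝ | 0 ≤ s ∧ M s ≤ t}

/-- `M` has positive increase: there are `α > 0`, `c ∈ (0,1]` and `s₀ > 0` such that
`M(λ s) / M(s) ≥ c λ^α` for all `λ ≥ 1` and `s ≥ s₀`. -/
def HasPositiveIncrease (M : ℝ → ℝ) : Prop :=
  ∃ α : ℝ, 0 < α ∧ ∃ c : ℝ, 0 < c ∧ c ≤ 1 ∧ ∃ s₀ : ℝ, 0 < s₀ ∧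
    ∀ lam : ℝ, 1 ≤ lam → ∀ s : ℝ, s₀ ≤ s → c * lam ^ α ≤ M (lam * s) / M s

end NUS

namespace NUS

section RightInverse

variable {M : ℝ → ℝ}

lemma le_Minv (hM : Tendsto M atTop atTop) {s t : ℝ} (hs : 0 ≤ s) (hst : M s ≤ t) :
    s ≤ Minv M t := by
  refine le_csSup ?_ ⟨hs, hst⟩
  obtain ⟨b, hb⟩ := (hM.eventually_gt_atTop t).exists_forall_of_atTop
  exact ⟨b, fun r hr => le_of_not_ge fun hbr => (hb r hbr).not_ge hr.2⟩

lemma HasPositiveIncrease.exists_eventually_mul_le (hM : HasPositiveIncrease M)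
    (hMinf : Tendsto M atTop atTop) (C : ℝ) :
    ∃ L : ℝ, 0 < L ∧ ∀ᶠ s in atTop, C * M s ≤ M (L * s) := by
  obtain ⟨α, hα, c, hc, -, s₀, -, hinc⟩ := hM
  obtain ⟨L, hL_one, hL⟩ := ((eventually_ge_atTop (1 : ℝ)).and
    ((tendsto_rpow_atTop hα).eventually_ge_atTop (C / c))).exists
  refine ⟨L, by linarith, ?_⟩
  filter_upwards [eventually_ge_atTop s₀, hMinf.eventually_gt_atTop 0] with s hs hMs
  calc C * M s ≤ c * L ^ α * M s := by gcongr; exact (div_le_iff₀' hc).1 hL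
    _ ≤ M (L * s) := (le_div_iff₀ hMs).1 (hinc L hL_one s hs)

lemma eventually_Minv_mul_le (hMinf : Tendsto M atTop atTop) {C L : ℝ} (hC : 0 < C) (hL : 0 < L)
    (hM : ∀ᶠ s in atTop, C * M s ≤ M (L * s)) :
    ∀ᶠ t in atTop, Minv M (C * t) ≤ L * Minv M t := by
  obtain ⟨s₁, hM⟩ := (hM.and (eventually_ge_atTop 0)).exists_forall_of_atTop
  have hs₁ : 0 ≤ s₁ := (hM s₁ le_rfl).2
  filter_upwards [eventually_ge_atTop (M s₁)] with t ht
  have hs₁t : s₁ ≤ Minv M t := le_Minv hMinf hs₁ ht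
  refine Real.sSup_le (fun s hs => ?_) (mul_nonneg hL.le (hs₁.trans hs₁t))
  rw [← div_le_iff₀' hL]
  rcases le_total (s / L) s₁ with hlt | hge
  · exact hlt.trans hs₁t
  · refine le_Minv hMinf (hs₁.trans hge) (le_of_mul_le_mul_left ?_ hC)
    calc C * M (s / L) ≤ M (L * (s / L)) := (hM _ hge).1
      _ = M s := by rw [mul_div_cancel₀ _ hL.ne']
      _ ≤ C * t := hs.2

lemma HasPositiveIncrease.exists_eventually_Minv_le (hM : HasPositiveIncrease M)
    (hMinf : Tendsto M atTop atTop) {a b : ℝ} (ha : 0 < a) (hb : 0 < b) :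
    ∃ L : ℝ, 0 < L ∧ ∀ᶠ t in atTop, Minv M (a * t) ≤ L * Minv M (b * t) := by
  obtain ⟨L, hL, hML⟩ := hM.exists_eventually_mul_le hMinf (a / b)
  refine ⟨L, hL, ?_⟩
  have hscale : ∀ᶠ t in atTop, Minv M (a / b * (b * t)) ≤ L * Minv M (b * t) :=
    (tendsto_id.const_mul_atTop hb).eventually
      (eventually_Minv_mul_le hMinf (div_pos ha hb) hL hML)
  simpa only [← mul_assoc, div_mul_cancel₀ a hb.ne'] using hscale

end RightInverse

section Resolvent

variable {X : Type*} [NormedAddCommGroup X] [NormedSpace ℂ X]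
  {T : ℝ → X →L[ℂ] X} {A : X →ₗ.[ℂ] X} {R S : X →L[ℂ] X} {K t : ℝ} {w z : ℂ}

lemma IsResolvent.eq_add_smul_comp (hR : IsResolvent A z R) (hS : IsResolvent A w S) :
    R = S + (w - z) • S.comp R := by
  ext y
  obtain ⟨hy, hRy⟩ := hR.1 y
  have hw : w • R y - A ⟨R y, hy⟩ = y + (w - z) • R y := by
    nth_rewrite 3 [← hRy]
    module
  have hSR := hS.2 ⟨R y, hy⟩
  rw [hw, map_add, map_smul] at hSR
  exact hSR.symm

lemma IsC0Semigroup.hasDerivWithinAt_orbit (hT : IsC0Semigroup T) (hA : IsGenerator A T)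
    (x : A.domain) {r : ℝ} (hr : 0 ≤ r) :
    HasDerivWithinAt (fun t => T t (x : X)) (T r (A x)) (Ici r) r := by
  have hzero : HasDerivWithinAt (fun t => T t (x : X)) (A x) (Ici 0) 0 := by
    rw [← hasDerivWithinAt_Ioi_iff_Ici, hasDerivWithinAt_iff_tendsto_slope' self_notMem_Ioi]
    refine ((hA x (A x)).1 ⟨x.2, rfl⟩).congr fun t => ?_
    rw [slope_def_module, hT.map_zero, sub_zero, ← Complex.ofReal_inv, Complex.coe_smul,
      one_apply_eq_self]
  have hshift : HasDerivWithinAt (fun t => T (t - r) (x : X)) (A x) (Ici r) r := by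
    have hsub : HasDerivWithinAt (fun t => t - r) 1 (Ici r) r :=
      (hasDerivWithinAt_id r _).sub_const r
    simpa [Function.comp_def] using HasDerivWithinAt.scomp_of_eq r hzero hsub
      (fun t ht => mem_Ici.2 (sub_nonneg.2 ht)) (sub_self r).symm
  refine ((T r).hasFDerivAt.restrictScalars ℝ).comp_hasDerivWithinAt r hshift |>.congr_of_mem
    (fun t ht => ?_) self_mem_Ici
  rw [Function.comp_apply, ← ContinuousLinearMap.comp_apply, ← hT.map_add hr (sub_nonneg.2 ht),
    add_sub_cancel]

lemma IsC0Semigroup.hasDerivWithinAt_exp_smul_orbit (hT : IsC0Semigroup T)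
    (hA : IsGenerator A T) (z : ℂ) (x : A.domain) {r : ℝ} (hr : 0 ≤ r) :
    HasDerivWithinAt (fun t : ℝ => exp (-z * t) • T t (x : X))
      (-(exp (-z * r) • T r (z • (x : X) - A x))) (Ici r) r := by
  have hexp : HasDerivAt (fun t : ℝ => exp (-z * t)) (exp (-z * r) * -z) r := by
    simpa using ((hasDerivAt_id (r : ℂ)).const_mul (-z)).cexp.comp_ofReal
  convert! hexp.hasDerivWithinAt.smul (hT.hasDerivWithinAt_orbit hA x hr) using 1
  rw [map_sub, map_smul]
  module

lemma norm_exp_neg_mul_le_one (hz : 0 ≤ z.re) {r : ℝ} (hr : 0 ≤ r) : ‖exp (-z * r)‖ ≤ 1 := by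
  rw [norm_exp, Real.exp_le_one_iff]
  simpa using mul_nonneg hz hr

lemma IsC0Semigroup.norm_le_norm_apply_add (hT : IsC0Semigroup T) (hA : IsGenerator A T)
    (hK : ∀ r ∈ Icc 0 t, ‖T r‖ ≤ K) (ht : 0 ≤ t) (hz : 0 ≤ z.re) (x : A.domain) :
    ‖(x : X)‖ ≤ ‖T t x‖ + K * t * ‖z • (x : X) - A x‖ := by
  let u : ℝ → X := fun r => exp (-z * r) • T r x
  have hu_cont : ContinuousOn u (Icc 0 t) :=
    ContinuousOn.smul (by fun_prop) ((hT.strongly_continuous x).mono Icc_subset_Ici_self)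
  have hu_deriv_le (r : ℝ) (hr : r ∈ Ico 0 t) :
      ‖-(exp (-z * r) • T r (z • (x : X) - A x))‖ ≤ K * ‖z • (x : X) - A x‖ := by
    rw [norm_neg, norm_smul]
    exact (mul_le_of_le_one_left (norm_nonneg _) (norm_exp_neg_mul_le_one hz hr.1)).trans
      ((T r).le_of_opNorm_le (hK r (Ico_subset_Icc_self hr)) _)
  have hu_sub : ‖u t - u 0‖ ≤ K * ‖z • (x : X) - A x‖ * (t - 0) :=
    norm_image_sub_le_of_norm_deriv_right_le_segment hu_cont
      (fun r hr => hT.hasDerivWithinAt_exp_smul_orbit hA z x hr.1) hu_deriv_le t ⟨ht, le_rfl⟩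
  have hu_zero : u 0 = x := by simp [u, hT.map_zero]
  have hu_t : ‖u t‖ ≤ ‖T t x‖ := by
    rw [norm_smul]
    exact mul_le_of_le_one_left (norm_nonneg _) (norm_exp_neg_mul_le_one hz ht)
  calc ‖(x : X)‖ = ‖u 0‖ := by rw [hu_zero]
    _ ≤ ‖u t‖ + ‖u t - u 0‖ := norm_le_norm_add_norm_sub _ _
    _ ≤ ‖T t x‖ + K * ‖z • (x : X) - A x‖ * (t - 0) := add_le_add hu_t hu_sub
    _ = ‖T t x‖ + K * t * ‖z • (x : X) - A x‖ := by ring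

lemma IsResolvent.norm_le_norm_comp_add (hT : IsC0Semigroup T) (hA : IsGenerator A T)
    (hK : ∀ r ∈ Icc 0 t, ‖T r‖ ≤ K) (ht : 0 ≤ t) (hz : 0 ≤ z.re)
    (hR : IsResolvent A z R) : ‖R‖ ≤ ‖(T t).comp R‖ + K * t := by
  have hK_nonneg : 0 ≤ K := (norm_nonneg (T 0)).trans (hK 0 ⟨le_rfl, ht⟩)
  refine R.opNorm_le_bound (by positivity) fun y => ?_
  obtain ⟨hy, hRy⟩ := hR.1 y
  have horbit := hT.norm_le_norm_apply_add hA hK ht hz ⟨R y, hy⟩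
  rw [hRy] at horbit
  have hcomp : ‖T t (R y)‖ ≤ ‖(T t).comp R‖ * ‖y‖ := ((T t).comp R).le_opNorm y
  linarith

lemma IsResolvent.norm_comp_le (hR : IsResolvent A z R) (hS : IsResolvent A w S)
    (B : X →L[ℂ] X) : ‖B.comp R‖ ≤ ‖B.comp S‖ * (1 + ‖z - w‖ * ‖R‖) := by
  have hBR : B.comp R = B.comp S + (w - z) • (B.comp S).comp R := by
    conv_lhs => rw [hR.eq_add_smul_comp hS]
    rw [ContinuousLinearMap.comp_add, ContinuousLinearMap.comp_smul, ContinuousLinearMap.comp_assoc]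
  calc ‖B.comp R‖ ≤ ‖B.comp S‖ + ‖w - z‖ * (‖B.comp S‖ * ‖R‖) := by
        rw [hBR]
        refine (norm_add_le _ _).trans ?_
        rw [norm_smul]
        gcongr
        exact (B.comp S).opNorm_comp_le R
    _ = ‖B.comp S‖ * (1 + ‖z - w‖ * ‖R‖) := by rw [norm_sub_rev w z]; ring

lemma IsResolvent.half_le_norm_sub_mul_norm_comp (hT : IsC0Semigroup T) (hA : IsGenerator A T)
    (hK : ∀ r ∈ Icc 0 t, ‖T r‖ ≤ K) (ht : 0 ≤ t) (hz : 0 ≤ z.re)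
    (hR : IsResolvent A z R) (hS : IsResolvent A w S) (hzw : 1 ≤ ‖z - w‖)
    (hR_large : 1 + 2 * (K * t) ≤ ‖R‖) : 1 / 2 ≤ ‖z - w‖ * ‖(T t).comp S‖ := by
  by_contra! hsmall
  have hS_small : ‖(T t).comp S‖ < 1 / 2 :=
    (le_mul_of_one_le_left (norm_nonneg _) hzw).trans_lt hsmall
  have hR_lt : ‖R‖ < 1 / 2 + 1 / 2 * ‖R‖ + K * t :=
    calc ‖R‖ ≤ ‖(T t).comp R‖ + K * t := hR.norm_le_norm_comp_add hT hA hK ht hz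
      _ ≤ ‖(T t).comp S‖ * (1 + ‖z - w‖ * ‖R‖) + K * t := by
        gcongr
        exact hR.norm_comp_le hS (T t)
      _ = ‖(T t).comp S‖ + ‖z - w‖ * ‖(T t).comp S‖ * ‖R‖ + K * t := by ring
      _ < 1 / 2 + 1 / 2 * ‖R‖ + K * t := by
        linarith [mul_le_mul_of_nonneg_right hsmall.le (norm_nonneg R)]
  linarith

end Resolvent

section LowerBound

open Bornology

variable {X : Type*} [NormedAddCommGroup X] [NormedSpace ℂ X]
  {T : ℝ → X →L[ℂ] X} {A : X →ₗ.[ℂ] X} {S : X →L[ℂ] X} {M : ℝ → ℝ} {w : ℂ}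

lemma eventually_one_le_norm_sub_le (w : ℂ) :
    ∀ᶠ s : ℝ in cobounded ℝ, 1 ≤ ‖I * s - w‖ ∧ ‖I * s - w‖ ≤ 2 * |s| := by
  filter_upwards [eventually_cobounded_le_norm (1 + ‖w‖)] with s hs
  have hIs : ‖I * s‖ = |s| := by simp
  rw [Real.norm_eq_abs] at hs
  constructor
  · linarith [norm_sub_norm_le (I * s) w]
  · linarith [norm_sub_le (I * s) w]

lemma exists_frequently_quarter_le_Minv_mul (hT : IsC0Semigroup T) (hA : IsGenerator A T)
    (hbdd : ∃ K : ℝ, ∀ t : ℝ, 0 ≤ t → ‖T t‖ ≤ K) (hS : IsResolvent A w S)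
    (hMinf : Tendsto M atTop atTop) {c₀ : ℝ} (hc₀ : 0 < c₀)
    (hlarge : ∃ᶠ s : ℝ in cobounded ℝ, ∃ R, IsResolvent A (I * s) R ∧ c₀ * M |s| ≤ ‖R‖) :
    ∃ c : ℝ, 0 < c ∧ ∃ᶠ t in atTop, 1 / 4 ≤ Minv M (c * t) * ‖(T t).comp S‖ := by
  obtain ⟨K, hK_pos, hK⟩ : ∃ K : ℝ, 0 < K ∧ ∀ t : ℝ, 0 ≤ t → ‖T t‖ ≤ K :=
    hbdd.elim fun K hK => ⟨max K 1, by positivity, fun t ht => (hK t ht).trans (le_max_left _ _)⟩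
  have hM_abs : Tendsto (fun s : ℝ => M |s|) (cobounded ℝ) atTop :=
    hMinf.comp tendsto_norm_cobounded_atTop
  have hc : 0 < 4 * K / c₀ := by positivity
  refine ⟨4 * K / c₀, hc, (hM_abs.atTop_div_const hc).frequently ?_⟩
  refine (hlarge.and_eventually ((eventually_one_le_norm_sub_le w).and
    (hM_abs.eventually_ge_atTop (2 / c₀)))).mono ?_
  rintro s ⟨⟨R, hR, hMR⟩, ⟨hsw, hsw_le⟩, hMs⟩
  rw [mul_div_cancel₀ _ hc.ne']
  have hM_pos : 0 < M |s| := (by positivity : 0 < 2 / c₀).trans_le hMs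
  set t := M |s| / (4 * K / c₀) with ht_def
  have hKt : K * t = c₀ * M |s| / 4 := by rw [ht_def]; field_simp
  have hR_large : 1 + 2 * (K * t) ≤ ‖R‖ :=
    calc 1 + 2 * (K * t) = 1 + c₀ * M |s| / 2 := by rw [hKt]; ring
      _ ≤ c₀ * M |s| := by linarith [(div_le_iff₀' hc₀).1 hMs]
      _ ≤ ‖R‖ := hMR
  have hhalf := hR.half_le_norm_sub_mul_norm_comp hT hA (fun r hr => hK r hr.1)
    (by positivity) (by simp) hS hsw hR_large
  calc (1 / 4 : ℝ) ≤ |s| * ‖(T t).comp S‖ := by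
        linarith [mul_le_mul_of_nonneg_right hsw_le (norm_nonneg ((T t).comp S))]
    _ ≤ Minv M (M |s|) * ‖(T t).comp S‖ := by
        gcongr
        exact le_Minv hMinf (abs_nonneg s) le_rfl

lemma HasPositiveIncrease.exists_frequently_le_Minv_mul (hM : HasPositiveIncrease M)
    (hMinf : Tendsto M atTop atTop) {g : ℝ → ℝ} (hg : ∀ t, 0 ≤ g t) {a b ε : ℝ} (ha : 0 < a)
    (hb : 0 < b) (hε : 0 < ε) (hfreq : ∃ᶠ t in atTop, ε ≤ Minv M (a * t) * g t) :
    ∃ δ : ℝ, 0 < δ ∧ ∃ᶠ t in atTop, δ ≤ Minv M (b * t) * g t := by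
  obtain ⟨L, hL, hle⟩ := hM.exists_eventually_Minv_le hMinf ha hb
  refine ⟨ε / L, by positivity, (hfreq.and_eventually hle).mono fun t ⟨hεt, hLt⟩ => ?_⟩
  rw [div_le_iff₀' hL]
  calc ε ≤ Minv M (a * t) * g t := hεt
    _ ≤ L * Minv M (b * t) * g t := mul_le_mul_of_nonneg_right hLt (hg t)
    _ = L * (Minv M (b * t) * g t) := mul_assoc _ _ _

end LowerBound

end NUS

open NUS Bornology in
theorem stmt18_general
    {X : Type*} [NormedAddCommGroup X] [NormedSpace ℂ X]
    {T : ℝ → X →L[ℂ] X} {A : X →ₗ.[ℂ] X}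
    (hT : IsC0Semigroup T) (hA : IsGenerator A T)
    (hbdd : ∃ K : ℝ, ∀ t : ℝ, 0 ≤ t → ‖T t‖ ≤ K)
    {w : ℂ} {S : X →L[ℂ] X} (hS : IsResolvent A w S)
    {M : ℝ → ℝ} (hMinf : Tendsto M atTop atTop)
    (hlarge : ∃ c : ℝ, 0 < c ∧ ∃ᶠ s : ℝ in cobounded ℝ,
      ∃ R : X →L[ℂ] X, IsResolvent A (I * s) R ∧ c * M |s| ≤ ‖R‖) :
    (∃ c : ℝ, 0 < c ∧ ∃ ε : ℝ, 0 < ε ∧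
      ∃ᶠ t in atTop, ε ≤ Minv M (c * t) * ‖(T t).comp S‖) ∧
    (HasPositiveIncrease M → ∀ c : ℝ, 0 < c → ∃ ε : ℝ, 0 < ε ∧
      ∃ᶠ t in atTop, ε ≤ Minv M (c * t) * ‖(T t).comp S‖) := by
  obtain ⟨c₀, hc₀, hlarge⟩ := hlarge
  obtain ⟨a, ha, hfreq⟩ := exists_frequently_quarter_le_Minv_mul hT hA hbdd hS hMinf hc₀ hlarge
  exact ⟨⟨a, ha, 1 / 4, by norm_num, hfreq⟩, fun hM c hc =>
    hM.exists_frequently_le_Minv_mul hMinf (fun _ => norm_nonneg _) ha hc (by norm_num) hfreq⟩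

open NUS in
/-- Proposition 5.4.  Let `T` be a bounded `C₀`-semigroup on a
complex Banach space `X` whose generator `A` satisfies `σ(A) ∩ iℝ = ∅`, and let
`M : [0, ∞) → (0, ∞)` be continuous, non-decreasing, with `M(s) → ∞`, such that
`limsup_{|s| → ∞} ‖(i s - A)⁻¹‖ / M(|s|) > 0`.  Then there exists `c > 0` with
`limsup_{t → ∞} M⁻¹(c t) ‖T(t) A⁻¹‖ > 0`; and if `M` has positive increase, this
holds for every `c > 0`.  (Here `A⁻¹ = -(0 - A)⁻¹` has the same norm as `(0 - A)⁻¹`,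
so `T(t) ∘ R₀` is used, where `R₀ = (0 - A)⁻¹`.) -/
theorem stmt18
    {X : Type*} [NormedAddCommGroup X] [NormedSpace ℂ X] [CompleteSpace X]
    (T : ℝ → X →L[ℂ] X) (A : X →ₗ.[ℂ] X)
    (hT : IsC0Semigroup T) (hgen : IsGenerator A T)
    (hbdd : ∃ K : ℝ, ∀ t : ℝ, 0 ≤ t → ‖T t‖ ≤ K)
    (hspec : ∀ s : ℝ, ∃ R : X →L[ℂ] X, IsResolvent A (Complex.I * s) R)
    (R0 : X →L[ℂ] X) (hR0 : IsResolvent A 0 R0)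
    (M : ℝ → ℝ)
    (hMpos : ∀ s : ℝ, 0 ≤ s → 0 < M s)
    (hMcont : ContinuousOn M (Ici (0 : ℝ)))
    (hMmono : MonotoneOn M (Ici (0 : ℝ)))
    (hMinf : Tendsto M atTop atTop)
    (hlimsup : ∃ c : ℝ, 0 < c ∧ ∀ n : ℝ, ∃ s : ℝ, n ≤ |s| ∧
      ∀ R : X →L[ℂ] X, IsResolvent A (Complex.I * s) R → c * M |s| ≤ ‖R‖) :
    (∃ c : ℝ, 0 < c ∧ ∃ ε : ℝ, 0 < ε ∧ ∀ t₀ : ℝ, ∃ t : ℝ, t₀ ≤ t ∧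
      ε ≤ Minv M (c * t) * ‖(T t).comp R0‖) ∧
    (HasPositiveIncrease M → ∀ c : ℝ, 0 < c → ∃ ε : ℝ, 0 < ε ∧ ∀ t₀ : ℝ,
      ∃ t : ℝ, t₀ ≤ t ∧ ε ≤ Minv M (c * t) * ‖(T t).comp R0‖) := by
  simpa only [frequently_atTop, ge_iff_le] using stmt18_general hT hgen hbdd hR0 hMinf <|
    hlimsup.imp fun c ⟨hc, h⟩ => ⟨hc, hasBasis_cobounded_norm.frequently_iff.2 fun n _ =>
      (h n).imp fun s ⟨hs, hR⟩ => ⟨hs, (hspec s).imp fun R h => ⟨h, hR R h⟩⟩⟩
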